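/- For every integer n ≥ 1, ∫_{−π/2}^{π/2} sin((π/2) cos θ − (2n+1)θ) · e^{−(π/2) sin θ} / (cosh(π sin θ) − cos(π cos θ)) dθ = 0. -/

import Mathlib

lemma aux_sin_ne (z : ℂ) (h1 : ‖z‖ ≤ 1) (h0 : z ≠ 0) : Complex.sin (Real.pi / 2 * z) ≠ 0 := by
  intro h
  rw [Complex.sin_eq_zero_iff] at h
  obtain ⟨k, hk⟩ := h
  have hpi : (Real.pi : ℂ) ≠ 0 := by exact_mod_cast Real.pi_ne_zero
  have hz : z = ((2 * k : ℤ) : ℂ) := by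
    push_cast
    apply mul_left_cancel₀ hpi
    linear_combination 2 * hk
  rw [hz, Complex.norm_intCast] at h1
  have h2 : |2 * k| ≤ 1 := by exact_mod_cast h1
  have hk0 : k = 0 := by
    rw [abs_le] at h2
    omega
  apply h0
  rw [hz, hk0]
  simp

lemma aux_circle (n : ℕ) (hn : 1 ≤ n) :
    (∮ z in C(0, 1), z ^ (2 * n) / Complex.sin (Real.pi / 2 * z)) = 0 := by
  let s : ℂ → ℂ := fun z => Complex.sin (Real.pi / 2 * z)
  have hs : Differentiable ℂ s := by
    intro z
    fun_prop
  have hds : HasDerivAt s (Real.pi / 2) 0 := by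
    have h := ((hasDerivAt_id (0 : ℂ)).const_mul (Real.pi / 2 : ℂ)).csin
    simpa using h
  have hpi : (Real.pi : ℂ) ≠ 0 := by exact_mod_cast Real.pi_ne_zero
  have hS : Differentiable ℂ (dslope s 0) := by
    have := (Complex.differentiableOn_dslope (f := s) (c := 0) (s := Set.univ) Filter.univ_mem).2
      hs.differentiableOn
    exact differentiableOn_univ.1 this
  have hSv : ∀ z : ℂ, z ≠ 0 → dslope s 0 z = s z / z := by
    intro z hz
    rw [dslope_of_ne _ hz, slope_def_field]
    simp [s]
  have hSne : ∀ z : ℂ, ‖z‖ ≤ 1 → dslope s 0 z ≠ 0 := by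
    intro z hz
    by_cases h : z = 0
    · rw [h, dslope_same, hds.deriv]
      exact div_ne_zero hpi two_ne_zero
    · rw [hSv z h]
      exact div_ne_zero (aux_sin_ne z hz h) h
  have key : (∮ z in C(0, 1), z ^ (2 * n - 1) / dslope s 0 z) = 0 := by
    apply Complex.circleIntegral_eq_zero_of_differentiable_on_off_countable zero_le_one
      Set.countable_empty
    · apply ContinuousOn.div (by fun_prop) hS.continuous.continuousOn
      intro z hz
      exact hSne z (by simpa using hz)
    · intro z hz
      have : ‖z‖ < 1 := by simpa using hz
      exact (by fun_prop : DifferentiableAt ℂ (fun z : ℂ => z ^ (2 * n - 1)) z).div (hS z)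
        (hSne z this.le)
  refine Eq.trans ?_ key
  apply circleIntegral.integral_congr zero_le_one
  intro z hz
  have hz1 : ‖z‖ = 1 := by simpa using hz
  have hz0 : z ≠ 0 := by
    rintro rfl
    simp at hz1
  have := aux_sin_ne z hz1.le hz0
  simp only
  rw [hSv z hz0]
  obtain ⟨k, rfl⟩ : ∃ k, n = k + 1 := ⟨n - 1, by omega⟩
  have e1 : 2 * (k + 1) - 1 = 2 * k + 1 := by omega
  rw [e1]
  simp only [s]
  field_simp
  ring

noncomputable def auxG (n : ℕ) (θ : ℝ) : ℂ :=
  (Complex.exp (θ * Complex.I)) ^ (2 * n + 1) /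
    Complex.sin (Real.pi / 2 * Complex.exp (θ * Complex.I))

lemma aux_sin_ne' (θ : ℝ) : Complex.sin (Real.pi / 2 * Complex.exp (θ * Complex.I)) ≠ 0 :=
  aux_sin_ne _ (by rw [Complex.norm_exp_ofReal_mul_I]) (Complex.exp_ne_zero _)

lemma auxG_cont (n : ℕ) : Continuous (auxG n) := by
  unfold auxG
  exact Continuous.div (by fun_prop) (by fun_prop) aux_sin_ne'

lemma auxG_periodic (n : ℕ) : Function.Periodic (auxG n) Real.pi := by
  intro θ
  unfold auxG
  have : Complex.exp (((θ + Real.pi : ℝ) : ℂ) * Complex.I) = - Complex.exp (θ * Complex.I) := by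
    push_cast
    rw [add_mul, Complex.exp_add, Complex.exp_pi_mul_I]
    ring
  rw [this, mul_neg, Complex.sin_neg, Odd.neg_pow ⟨n, rfl⟩, neg_div_neg_eq]

lemma auxG_int (n : ℕ) (hn : 1 ≤ n) :
    ∫ θ in (-(Real.pi/2))..(Real.pi/2), auxG n θ = 0 := by
  have h := aux_circle n hn
  have h2 : ∫ θ in (0:ℝ)..(2 * Real.pi), auxG n θ = 0 := by
    have : ∫ θ in (0:ℝ)..(2 * Real.pi), Complex.I * auxG n θ = 0 := by
      rw [← h, circleIntegral]
      apply intervalIntegral.integral_congr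
      intro θ _
      simp only [deriv_circleMap, circleMap, auxG, smul_eq_mul, Complex.ofReal_one, zero_add, one_mul]
      ring
    rw [intervalIntegral.integral_const_mul] at this
    exact (mul_eq_zero.1 this).resolve_left Complex.I_ne_zero
  have hi : ∀ a b, IntervalIntegrable (auxG n) MeasureTheory.volume a b :=
    fun a b => (auxG_cont n).intervalIntegrable a b
  rw [← intervalIntegral.integral_add_adjacent_intervals (hi 0 Real.pi) (hi _ _)] at h2
  have e1 := (auxG_periodic n).intervalIntegral_add_eq (-(Real.pi/2)) 0
  have e2 := (auxG_periodic n).intervalIntegral_add_eq (-(Real.pi/2)) Real.pi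
  rw [show -(Real.pi/2) + Real.pi = Real.pi/2 by ring] at e1 e2
  rw [zero_add] at e1
  rw [← two_mul] at e2
  rw [← e1, ← e2, ← two_mul] at h2
  exact (mul_eq_zero.1 h2).resolve_left two_ne_zero

lemma aux_sin_re_im (θ : ℝ) : Complex.sin (Real.pi / 2 * Complex.exp (θ * Complex.I)) =
    ⟨Real.sin (Real.pi/2 * Real.cos θ) * Real.cosh (Real.pi/2 * Real.sin θ),
     Real.cos (Real.pi/2 * Real.cos θ) * Real.sinh (Real.pi/2 * Real.sin θ)⟩ := by
  have : (Real.pi / 2 * Complex.exp (θ * Complex.I) : ℂ) =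
      ((Real.pi/2 * Real.cos θ : ℝ) : ℂ) + ((Real.pi/2 * Real.sin θ : ℝ) : ℂ) * Complex.I := by
    rw [Complex.exp_mul_I]
    push_cast
    ring
  rw [this, Complex.sin_add_mul_I, Complex.mk_eq_add_mul_I]
  push_cast
  ring

lemma aux_den (θ : ℝ) :
    Real.cosh (Real.pi * Real.sin θ) - Real.cos (Real.pi * Real.cos θ) =
      2 * Complex.normSq (Complex.sin (Real.pi / 2 * Complex.exp (θ * Complex.I))) := by
  rw [aux_sin_re_im, Complex.normSq_mk]
  rw [show Real.pi * Real.sin θ = 2 * (Real.pi/2 * Real.sin θ) by ring,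
    show Real.pi * Real.cos θ = 2 * (Real.pi/2 * Real.cos θ) by ring]
  rw [Real.cosh_two_mul, Real.cos_two_mul]
  have h1 := Real.cosh_sq (Real.pi/2 * Real.sin θ)
  have h2 := Real.sin_sq_add_cos_sq (Real.pi/2 * Real.cos θ)
  generalize Real.sin (Real.pi/2 * Real.cos θ) = S at *
  generalize Real.cos (Real.pi/2 * Real.cos θ) = C at *
  generalize Real.sinh (Real.pi/2 * Real.sin θ) = T at *
  generalize Real.cosh (Real.pi/2 * Real.sin θ) = K at *
  have : S^2 = 1 - C^2 := by linarith
  linear_combination (1 - 2 * S^2) * h1 - (2 + 2*T^2) * this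

lemma aux_den_ne (θ : ℝ) :
    Real.cosh (Real.pi * Real.sin θ) - Real.cos (Real.pi * Real.cos θ) ≠ 0 := by
  rw [aux_den]
  have := aux_sin_ne' θ
  simpa using this

noncomputable def auxF (n : ℕ) (θ : ℝ) : ℝ :=
  Real.sin (Real.pi/2 * Real.cos θ - (2 * (n : ℝ) + 1) * θ) *
          Real.exp (-(Real.pi/2) * Real.sin θ) /
          (Real.cosh (Real.pi * Real.sin θ) - Real.cos (Real.pi * Real.cos θ))

lemma auxF_cont (n : ℕ) : Continuous (auxF n) := by
  unfold auxF
  exact Continuous.div (by fun_prop) (by fun_prop) aux_den_ne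

lemma auxF_symm (n : ℕ) (θ : ℝ) : auxF n θ + auxF n (-θ) = (auxG n θ).re := by
  have hne : Complex.normSq (Complex.sin (Real.pi / 2 * Complex.exp (θ * Complex.I))) ≠ 0 := by
    simpa using aux_sin_ne' θ
  have hz : (Complex.exp (θ * Complex.I)) ^ (2 * n + 1) =
      ⟨Real.cos ((2 * (n:ℝ) + 1) * θ), Real.sin ((2 * (n:ℝ) + 1) * θ)⟩ := by
    rw [← Complex.exp_nat_mul, Complex.mk_eq_add_mul_I, Complex.ofReal_cos, Complex.ofReal_sin,
      ← Complex.exp_mul_I]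
    congr 1
    push_cast
    ring
  unfold auxF auxG
  simp only [Real.cos_neg, Real.sin_neg, mul_neg, Real.cosh_neg, sub_neg_eq_add]
  rw [aux_den, hz, Complex.div_re]
  rw [aux_sin_re_im] at hne ⊢
  generalize Complex.normSq _ = N at *
  simp only
  rw [Real.sin_sub, Real.sin_add, Real.cosh_eq, Real.sinh_eq, neg_mul, neg_neg]
  field_simp
  ring

/-- For every `n ≥ 1`,
`∫_{-π/2}^{π/2} sin((π/2) cos θ - (2n+1)θ) e^{-(π/2) sin θ}
   / (cosh(π sin θ) - cos(π cos θ)) dθ = 0`. -/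
theorem stmt_13 (n : ℕ) (hn : 1 ≤ n) :
    ∫ θ in (-(Real.pi/2))..(Real.pi/2),
        Real.sin (Real.pi/2 * Real.cos θ - (2 * (n : ℝ) + 1) * θ) *
          Real.exp (-(Real.pi/2) * Real.sin θ) /
          (Real.cosh (Real.pi * Real.sin θ) - Real.cos (Real.pi * Real.cos θ))
      = 0 := by
  change ∫ θ in (-(Real.pi/2))..(Real.pi/2), auxF n θ = 0
  have h1 : ∫ θ in (-(Real.pi/2))..(Real.pi/2), auxF n (-θ) =
      ∫ θ in (-(Real.pi/2))..(Real.pi/2), auxF n θ := by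
    rw [intervalIntegral.integral_comp_neg, neg_neg]
  have h2 : ∫ θ in (-(Real.pi/2))..(Real.pi/2), (auxF n θ + auxF n (-θ)) = 0 := by
    simp only [auxF_symm]
    have h := Complex.reCLM.intervalIntegral_comp_comm
      ((auxG_cont n).intervalIntegrable (μ := MeasureTheory.volume) (-(Real.pi/2)) (Real.pi/2))
    rw [auxG_int n hn] at h
    simpa using h
  have hc : Continuous (fun θ => auxF n (-θ)) := (auxF_cont n).comp continuous_neg
  rw [intervalIntegral.integral_add ((auxF_cont n).intervalIntegrable _ _)
    (hc.intervalIntegrable _ _), h1] at h2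
  linarith
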